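/- arXiv:math/0306434 — 4 statements merged into one kernel-verified Lean document; each statement's English description precedes it below -/
import Mathlib

section
/- Let ν be a partition with l = l(ν) parts. For every nonzero complex number q, ∏_{(i,j) a cell of ν} (q^{−h(i,j)} − q^{h(i,j)}) · ∏_{1≤a<b≤l} (q^{−(ν_a − ν_b − a + b)} − q^{ν_a − ν_b − a + b}) = ∏_{1≤a<b≤l} (q^{−(b−a)} − q^{b−a}) · ∏_{i=1}^{l} ∏_{j=1}^{ν_i} (q^{−(j − i + l)} − q^{j − i + l}). -/
open Finset

/-!
The identity holds row by row, with `k ↦ q^{-k} - q^k` replaced by an arbitrary function `f`. In row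
`i`, the hook lengths `h(i, j)` together with the numbers `ν_i - ν_b - i + b` for `b > i` list each
of `1, …, ν_i + l - i` exactly once (Macdonald, *Symmetric functions and Hall polynomials*,
I (1.7)): an equality `h(i, j) = ν_i - ν_b - i + b` would read `ν'_j - b + 1 = j - ν_b`, which the
equivalence `b ≤ ν'_j ↔ j ≤ ν_b` forbids. The numbers `b - i` for `b > i` together with
`j - i + l` for `j ≤ ν_i` trivially list the same interval.
-/

section Reindexing

variable {ι κ α M : Type*} [CommMonoid M]

theorem prod_mul_prod_eq_prod_of_injOn {s : Finset ι} {t : Finset κ} {u : Finset α}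
    {g : ι → α} {h : κ → α} (hg : Set.InjOn g s) (hh : Set.InjOn h t)
    (hgh : ∀ x ∈ s, ∀ y ∈ t, g x ≠ h y) (hgu : ∀ x ∈ s, g x ∈ u) (hhu : ∀ y ∈ t, h y ∈ u)
    (hcard : #u = #s + #t) (f : α → M) :
    (∏ x ∈ s, f (g x)) * ∏ y ∈ t, f (h y) = ∏ z ∈ u, f z := by
  have hmaps : Set.MapsTo (Sum.elim g h) (s.disjSum t) u := by
    rintro (x | y) hxy
    · exact hgu x (inl_mem_disjSum.mp hxy)
    · exact hhu y (inr_mem_disjSum.mp hxy)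
  have hinj : Set.InjOn (Sum.elim g h) (s.disjSum t) := by
    rintro (x | x) hx (y | y) hy hxy <;>
      simp only [mem_coe, inl_mem_disjSum, inr_mem_disjSum] at hx hy
    · exact congrArg Sum.inl (hg hx hy hxy)
    · exact absurd hxy (hgh x hx y hy)
    · exact absurd hxy.symm (hgh y hy x hx)
    · exact congrArg Sum.inr (hh hx hy hxy)
  have hsurj : Set.SurjOn (Sum.elim g h) (s.disjSum t) u :=
    surjOn_of_injOn_of_card_le _ hmaps hinj (by rw [card_disjSum, hcard])
  calc (∏ x ∈ s, f (g x)) * ∏ y ∈ t, f (h y)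
      = ∏ z ∈ s.disjSum t, f (Sum.elim g h z) :=
        (prod_disjSum s t fun z => f (Sum.elim g h z)).symm
    _ = ∏ z ∈ u, f z := prod_nbij _ hmaps hinj hsurj fun _ _ => rfl

theorem prod_sub_mul_prod_sub_add {i l : ℕ} (hi : i ≤ l) (n : ℕ) (f : ℤ → M) :
    (∏ b ∈ Icc (i + 1) l, f ((b : ℤ) - i)) * ∏ j ∈ Icc 1 n, f ((j : ℤ) - i + l)
      = ∏ k ∈ Icc (1 : ℤ) (n + l - i), f k := by
  apply prod_mul_prod_eq_prod_of_injOn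
  · intro x _ y _ hxy
    simpa using hxy
  · intro x _ y _ hxy
    simpa using hxy
  · intro b hb j hj
    rw [mem_Icc] at hb hj
    omega
  · intro b hb
    rw [mem_Icc] at hb ⊢
    omega
  · intro j hj
    rw [mem_Icc] at hj ⊢
    omega
  · simp only [Int.card_Icc, Nat.card_Icc]
    omega

end Reindexing

/-- The part `ν'_j` of the conjugate of the partition `ν_1 ≥ … ≥ ν_l`. Parts are indexed from `1`;
the values of `ν` outside `1, …, l` are ignored. -/
def conjugatePart (l : ℕ) (ν : ℕ → ℕ) (j : ℕ) : ℕ := #{i ∈ Icc 1 l | j ≤ ν i}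

/-- The hook length `h(i, j)` of the partition `ν_1 ≥ … ≥ ν_l`. It is an integer, so that the
subtractions do not truncate, and it is positive when `(i, j)` is a cell of `ν`. -/
def hookLength (l : ℕ) (ν : ℕ → ℕ) (i j : ℕ) : ℤ := (ν i : ℤ) + conjugatePart l ν j - i - j + 1

/-- The difference `(ν_a - a) - (ν_b - b)` of shifted parts: the pairing of `ν + ρ` with the root
`ε_a - ε_b`, where `ρ` is the Weyl vector of type `A`. -/
def shiftedDiff (ν : ℕ → ℕ) (a b : ℕ) : ℤ := (ν a : ℤ) - ν b - a + b

section Partition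

variable {l : ℕ} {ν : ℕ → ℕ}

theorem conjugatePart_le (l : ℕ) (ν : ℕ → ℕ) (j : ℕ) : conjugatePart l ν j ≤ l :=
  (card_filter_le _ _).trans_eq (by simp)

theorem antitone_conjugatePart (l : ℕ) (ν : ℕ → ℕ) : Antitone (conjugatePart l ν) :=
  fun _ _ hjk => card_le_card (monotone_filter_right _ fun _ _ => hjk.trans)

theorem le_conjugatePart_iff (hν : AntitoneOn ν (Set.Icc 1 l)) {b : ℕ} (hb : b ∈ Set.Icc 1 l)
    {j : ℕ} : b ≤ conjugatePart l ν j ↔ j ≤ ν b := by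
  constructor
  · contrapose!
    intro hj
    have hsub : {i ∈ Icc 1 l | j ≤ ν i} ⊆ Ico 1 b := by
      intro i hi
      rw [mem_filter, mem_Icc] at hi
      refine mem_Ico.mpr ⟨hi.1.1, lt_of_not_ge fun hbi => ?_⟩
      exact (hi.2.trans (hν hb hi.1 hbi)).not_gt hj
    calc conjugatePart l ν j ≤ #(Ico 1 b) := card_le_card hsub
      _ = b - 1 := Nat.card_Ico 1 b
      _ < b := Nat.sub_one_lt_of_lt hb.1
  · intro hj
    have hsub : Icc 1 b ⊆ {i ∈ Icc 1 l | j ≤ ν i} := by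
      intro i hi
      rw [mem_Icc] at hi
      have hil : i ∈ Set.Icc 1 l := ⟨hi.1, hi.2.trans hb.2⟩
      exact mem_filter.mpr ⟨mem_Icc.mpr hil, hj.trans (hν hil hb hi.2)⟩
    calc b = #(Icc 1 b) := by simp
      _ ≤ conjugatePart l ν j := card_le_card hsub

theorem strictAnti_hookLength (l : ℕ) (ν : ℕ → ℕ) (i : ℕ) : StrictAnti (hookLength l ν i) := by
  intro j k hjk
  have := antitone_conjugatePart l ν hjk.le
  simp only [hookLength]
  omega

theorem strictMonoOn_shiftedDiff (hν : AntitoneOn ν (Set.Icc 1 l)) (a : ℕ) :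
    StrictMonoOn (shiftedDiff ν a) (Set.Icc 1 l) := by
  intro b hb c hc hbc
  have := hν hb hc hbc.le
  simp only [shiftedDiff]
  omega

theorem hookLength_ne_shiftedDiff (hν : AntitoneOn ν (Set.Icc 1 l)) {b : ℕ}
    (hb : b ∈ Set.Icc 1 l) (i j : ℕ) : hookLength l ν i j ≠ shiftedDiff ν i b := by
  have := le_conjugatePart_iff hν hb (j := j)
  simp only [hookLength, shiftedDiff]
  omega

theorem hookLength_mem_Icc (hν : AntitoneOn ν (Set.Icc 1 l)) {i j : ℕ} (hi : i ∈ Set.Icc 1 l)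
    (hj : j ∈ Icc 1 (ν i)) : hookLength l ν i j ∈ Icc (1 : ℤ) (ν i + l - i) := by
  rw [mem_Icc] at hj
  have hleg : i ≤ conjugatePart l ν j := (le_conjugatePart_iff hν hi).mpr hj.2
  have := conjugatePart_le l ν j
  rw [mem_Icc, hookLength]
  omega

theorem shiftedDiff_mem_Icc (hν : AntitoneOn ν (Set.Icc 1 l)) {a b : ℕ} (ha : a ∈ Set.Icc 1 l)
    (hb : b ∈ Icc (a + 1) l) : shiftedDiff ν a b ∈ Icc (1 : ℤ) (ν a + l - a) := by
  rw [mem_Icc] at hb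
  have := hν ha ⟨by omega, hb.2⟩ (by omega : a ≤ b)
  rw [mem_Icc, shiftedDiff]
  omega

variable {M : Type*} [CommMonoid M]

theorem prod_hookLength_mul_prod_shiftedDiff (hν : AntitoneOn ν (Set.Icc 1 l)) {i : ℕ}
    (hi : i ∈ Set.Icc 1 l) (f : ℤ → M) :
    (∏ j ∈ Icc 1 (ν i), f (hookLength l ν i j)) * ∏ b ∈ Icc (i + 1) l, f (shiftedDiff ν i b)
      = ∏ k ∈ Icc (1 : ℤ) (ν i + l - i), f k := by
  have htail : ∀ b ∈ Icc (i + 1) l, b ∈ Set.Icc 1 l := fun b hb =>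
    ⟨le_of_add_le_right (mem_Icc.mp hb).1, (mem_Icc.mp hb).2⟩
  have hcard : #(Icc (1 : ℤ) (ν i + l - i)) = #(Icc 1 (ν i)) + #(Icc (i + 1) l) := by
    have := hi.2
    simp only [Int.card_Icc, Nat.card_Icc]
    omega
  exact prod_mul_prod_eq_prod_of_injOn (strictAnti_hookLength l ν i).injective.injOn
    ((strictMonoOn_shiftedDiff hν i).injOn.mono htail)
    (fun j _ b hb => hookLength_ne_shiftedDiff hν (htail b hb) i j)
    (fun _ => hookLength_mem_Icc hν hi) (fun _ => shiftedDiff_mem_Icc hν hi) hcard f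

theorem marino_vafa_q_identity_general (hν : AntitoneOn ν (Set.Icc 1 l)) (f : ℤ → M) :
    (∏ i ∈ Icc 1 l, ∏ j ∈ Icc 1 (ν i), f (hookLength l ν i j)) *
        ∏ a ∈ Icc 1 l, ∏ b ∈ Icc (a + 1) l, f (shiftedDiff ν a b)
      = (∏ a ∈ Icc 1 l, ∏ b ∈ Icc (a + 1) l, f ((b : ℤ) - a)) *
        ∏ i ∈ Icc 1 l, ∏ j ∈ Icc 1 (ν i), f ((j : ℤ) - i + l) := by
  rw [← prod_mul_distrib, ← prod_mul_distrib]
  refine prod_congr rfl fun i hi => ?_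
  rw [mem_Icc] at hi
  rw [prod_hookLength_mul_prod_shiftedDiff hν hi, prod_sub_mul_prod_sub_add hi.2]

end Partition

/-- for a partition `ν` with `l` parts (indexed `1,…,l`), conjugate `ν'`,
hook lengths `h(i,j) = ν i + ν' j − i − j + 1`, and any nonzero complex `q`:
`∏_{cells} (q^{−h} − q^{h}) · ∏_{a<b} (q^{−(ν_a−ν_b−a+b)} − q^{ν_a−ν_b−a+b})
 = ∏_{a<b} (q^{−(b−a)} − q^{b−a}) · ∏_i ∏_j (q^{−(j−i+l)} − q^{j−i+l})`. -/
theorem marino_vafa_q_identity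
    (l : ℕ) (ν : ℕ → ℕ)
    (hanti : ∀ a b : ℕ, 1 ≤ a → a ≤ b → b ≤ l → ν b ≤ ν a)
    (hpos : ∀ i : ℕ, 1 ≤ i → i ≤ l → 0 < ν i)
    (ν' : ℕ → ℕ)
    (hν' : ∀ j : ℕ, ν' j = ((Finset.Icc 1 l).filter fun i => j ≤ ν i).card)
    (q : ℂ) (hq : q ≠ 0) :
    (∏ i ∈ Finset.Icc 1 l, ∏ j ∈ Finset.Icc 1 (ν i),
        (q ^ (-((ν i : ℤ) + (ν' j : ℤ) - (i : ℤ) - (j : ℤ) + 1))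
          - q ^ ((ν i : ℤ) + (ν' j : ℤ) - (i : ℤ) - (j : ℤ) + 1))) *
      (∏ a ∈ Finset.Icc 1 l, ∏ b ∈ Finset.Icc (a + 1) l,
        (q ^ (-((ν a : ℤ) - (ν b : ℤ) - (a : ℤ) + (b : ℤ)))
          - q ^ ((ν a : ℤ) - (ν b : ℤ) - (a : ℤ) + (b : ℤ))))
    = (∏ a ∈ Finset.Icc 1 l, ∏ b ∈ Finset.Icc (a + 1) l,
        (q ^ (-((b : ℤ) - (a : ℤ))) - q ^ ((b : ℤ) - (a : ℤ)))) *
      (∏ i ∈ Finset.Icc 1 l, ∏ j ∈ Finset.Icc 1 (ν i),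
        (q ^ (-((j : ℤ) - (i : ℤ) + (l : ℤ))) - q ^ ((j : ℤ) - (i : ℤ) + (l : ℤ)))) := by
  obtain rfl : ν' = conjugatePart l ν := funext hν'
  exact marino_vafa_q_identity_general (fun a ha b hb hab => hanti a b ha.1 hab hb.2)
    fun k => q ^ (-k) - q ^ k
end

section
/- Let h be a permutation of a finite set X and let s ≠ t be two points of X. Then the cycle type (including fixed points) of swap(s,t)∘h is obtained from the cycle type of h in exactly one of the following two ways: either (join) two parts i and j are removed and one part i+j is added, or (cut) one part k is removed and two parts a, b with a + b = k are added. -/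
open Finset Equiv

/-- The cycle type of a permutation including fixed points: the multiset of the sizes of
all cycles (orbits), where each fixed point contributes a part equal to `1`. -/
def cycleTypeFull {X : Type*} [Fintype X] [DecidableEq X] (h : Equiv.Perm X) : Multiset ℕ :=
  h.cycleType + Multiset.replicate (Finset.univ.filter fun x => h x = x).card 1

/-!
Identifying `s` with `t` in the cycle partitions of `h` and of `swap s t * h` gives the same
partition: an equivalence relation containing `(s, t)` contains all `(x, h x)` iff it contains all
`(x, swap s t (h x))`. The sign shows that the two permutations have different numbers of cycles,
so exactly one of the two cycle partitions already has `s` and `t` in a common class, and the other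
one becomes equal to it when the classes of `s` and `t` are united.
-/

section Join

variable {α : Type*} [Add α]

/-- The join relation between multisets of part sizes: `N` arises from `M` by replacing two parts
`i` and `j` by the single part `i + j`. Read from `N` to `M`, it is a cut. -/
def IsJoin (M N : Multiset α) : Prop :=
  ∃ (i j : α) (K : Multiset α), M = i ::ₘ j ::ₘ K ∧ N = (i + j) ::ₘ K

variable {M N : Multiset α}

theorem IsJoin.card_eq (h : IsJoin M N) : M.card = N.card + 1 := by
  obtain ⟨i, j, K, rfl, rfl⟩ := h
  simp only [Multiset.card_cons]

theorem IsJoin.asymm (h : IsJoin M N) : ¬ IsJoin N M := by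
  intro h'
  have := h.card_eq
  have := h'.card_eq
  omega

theorem isJoin_iff_exists_erase_erase [DecidableEq α] :
    IsJoin M N ↔ ∃ i j, i ∈ M ∧ j ∈ M.erase i ∧ N = (M.erase i).erase j + {i + j} := by
  constructor
  · rintro ⟨i, j, K, rfl, rfl⟩
    exact ⟨i, j, by simp, by simp, by simp [add_comm K]⟩
  · rintro ⟨i, j, hi, hj, rfl⟩
    exact ⟨i, j, (M.erase i).erase j, by rw [Multiset.cons_erase hj, Multiset.cons_erase hi],
      by rw [add_comm, Multiset.singleton_add]⟩

theorem isJoin_iff_exists_erase_add_pair [DecidableEq α] :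
    IsJoin M N ↔ ∃ a b, a + b ∈ N ∧ M = N.erase (a + b) + {a, b} := by
  have add_pair (K : Multiset α) (a b : α) : K + {a, b} = a ::ₘ b ::ₘ K := by
    rw [add_comm, Multiset.insert_eq_cons, Multiset.cons_add, Multiset.singleton_add]
  constructor
  · rintro ⟨a, b, K, rfl, rfl⟩
    exact ⟨a, b, Multiset.mem_cons_self _ _, by rw [Multiset.erase_cons_head, add_pair]⟩
  · rintro ⟨a, b, hab, rfl⟩
    exact ⟨a, b, N.erase (a + b), add_pair _ _ _, (Multiset.cons_erase hab).symm⟩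

end Join

section MergeClasses

variable {X : Type*} {r m : Setoid X} {s t : X}

/-- The equivalence relation obtained from `r` by uniting the classes of `s` and `t`, that is,
the join of `r` with the relation identifying `s` and `t`. -/
def mergeClasses (r : Setoid X) (s t : X) : Setoid X where
  r x y := r x y ∨ (r s x ∨ r t x) ∧ (r s y ∨ r t y)
  iseqv := by
    refine ⟨fun x => Or.inl (r.refl x), ?_, ?_⟩
    · rintro x y (hxy | ⟨hx, hy⟩)
      exacts [Or.inl (r.symm hxy), Or.inr ⟨hy, hx⟩]
    · rintro x y z (hxy | ⟨hx, hy⟩) (hyz | ⟨hy', hz⟩)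
      · exact Or.inl (r.trans hxy hyz)
      · exact Or.inr ⟨hy'.imp (r.trans · (r.symm hxy)) (r.trans · (r.symm hxy)), hz⟩
      · exact Or.inr ⟨hx, hy.imp (r.trans · hyz) (r.trans · hyz)⟩
      · exact Or.inr ⟨hx, hz⟩

theorem mergeClasses_le_iff : mergeClasses r s t ≤ m ↔ r ≤ m ∧ m s t := by
  constructor
  · intro h
    exact ⟨fun x y hxy => h (Or.inl hxy),
      h (Or.inr ⟨Or.inl (r.refl s), Or.inr (r.refl t)⟩)⟩
  · rintro ⟨hrm, hst⟩ x y (hxy | ⟨hx, hy⟩)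
    · exact hrm hxy
    · have rel_s {z : X} (hz : r s z ∨ r t z) : m s z :=
        hz.elim (fun h => hrm h) fun h => m.trans hst (hrm h)
      exact m.trans (m.symm (rel_s hx)) (rel_s hy)

theorem mergeClasses_eq_self (hst : r s t) : mergeClasses r s t = r :=
  le_antisymm (mergeClasses_le_iff.2 ⟨le_rfl, hst⟩) (mergeClasses_le_iff.1 le_rfl).1

end MergeClasses

section ClassSizes

variable {X : Type*} [Fintype X] [DecidableEq X] {r r' : Setoid X} {s t x : X}

open Classical in
/-- The partition of a finite type into the equivalence classes of `r`; decidability of `r` is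
supplied classically. -/
noncomputable def classPartition (r : Setoid X) : Finpartition (univ : Finset X) :=
  Finpartition.ofSetoid r

/-- The multiset of the cardinalities of the equivalence classes of `r`. -/
noncomputable def classSizes (r : Setoid X) : Multiset ℕ :=
  (classPartition r).parts.val.map card

theorem mem_part_classPartition {y : X} : y ∈ (classPartition r).part x ↔ r x y := by
  classical exact Finpartition.mem_part_ofSetoid_iff_rel

theorem part_classPartition_eq_iff :
    (classPartition r).part s = (classPartition r).part t ↔ r s t := by
  rw [← (classPartition r).mem_part_iff_part_eq_part (mem_univ s) (mem_univ t),
    mem_part_classPartition, r.comm']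

theorem mem_parts_classPartition {A : Finset X} :
    A ∈ (classPartition r).parts ↔ ∃ x, (classPartition r).part x = A := by
  constructor
  · intro hA
    obtain ⟨x, hx⟩ := (classPartition r).nonempty_of_mem_parts hA
    exact ⟨x, (classPartition r).part_eq_of_mem hA hx⟩
  · rintro ⟨x, rfl⟩
    exact (classPartition r).part_mem.2 (mem_univ x)

theorem part_classPartition_mergeClasses_of_rel (hx : r s x ∨ r t x) :
    (classPartition (mergeClasses r s t)).part x =
      (classPartition r).part s ∪ (classPartition r).part t := by
  ext y
  simp only [mem_union, mem_part_classPartition]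
  refine ⟨?_, fun hy => Or.inr ⟨hx, hy⟩⟩
  rintro (hxy | ⟨-, hy⟩)
  exacts [hx.imp (r.trans · hxy) (r.trans · hxy), hy]

theorem part_classPartition_mergeClasses_of_not_rel (hx : ¬ (r s x ∨ r t x)) :
    (classPartition (mergeClasses r s t)).part x = (classPartition r).part x := by
  ext y
  simp only [mem_part_classPartition]
  exact or_iff_left fun h => hx h.1

theorem parts_classPartition_mergeClasses (r : Setoid X) (s t : X) :
    (classPartition (mergeClasses r s t)).parts =
      insert ((classPartition r).part s ∪ (classPartition r).part t)
        (((classPartition r).parts.erase ((classPartition r).part s)).erase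
          ((classPartition r).part t)) := by
  ext A
  simp only [mem_insert, mem_erase, mem_parts_classPartition]
  constructor
  · rintro ⟨x, rfl⟩
    by_cases hx : r s x ∨ r t x
    · exact Or.inl (part_classPartition_mergeClasses_of_rel hx)
    · rw [part_classPartition_mergeClasses_of_not_rel hx]
      have ⟨hsx, htx⟩ := not_or.1 hx
      exact Or.inr ⟨fun h => htx (part_classPartition_eq_iff.1 h.symm),
        fun h => hsx (part_classPartition_eq_iff.1 h.symm), x, rfl⟩
  · rintro (rfl | ⟨htx, hsx, x, rfl⟩)
    · exact ⟨s, part_classPartition_mergeClasses_of_rel (Or.inl (r.refl s))⟩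
    · refine ⟨x, part_classPartition_mergeClasses_of_not_rel ?_⟩
      rintro (h | h)
      exacts [hsx (part_classPartition_eq_iff.2 h).symm, htx (part_classPartition_eq_iff.2 h).symm]

theorem isJoin_classSizes_mergeClasses (hst : ¬ r s t) :
    IsJoin (classSizes r) (classSizes (mergeClasses r s t)) := by
  set P := classPartition r with hP
  have hs : P.part s ∈ P.parts := P.part_mem.2 (mem_univ s)
  have ht : P.part t ∈ P.parts.erase (P.part s) :=
    mem_erase.2 ⟨fun h => hst (part_classPartition_eq_iff.1 h.symm), P.part_mem.2 (mem_univ t)⟩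
  have hdisj : Disjoint (P.part s) (P.part t) :=
    P.disjoint hs (mem_of_mem_erase ht) (ne_of_mem_erase ht).symm
  have hunion : P.part s ∪ P.part t ∉ (P.parts.erase (P.part s)).erase (P.part t) := by
    simp only [mem_erase, not_and]
    exact fun _ hne hmem =>
      hne (P.part_eq_of_mem hmem (mem_union_left _ (P.mem_part (mem_univ s)))).symm
  refine ⟨#(P.part s), #(P.part t), ((P.parts.erase (P.part s)).erase (P.part t)).val.map card,
    ?_, ?_⟩
  · rw [← Multiset.map_cons, ← Multiset.map_cons, erase_val, Multiset.cons_erase ht, erase_val,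
      Multiset.cons_erase hs, classSizes]
  · rw [classSizes, parts_classPartition_mergeClasses, ← hP, insert_val_of_notMem hunion,
      Multiset.map_cons, card_union_of_disjoint hdisj]

theorem isJoin_classSizes_or_isJoin_classSizes (hm : mergeClasses r s t = mergeClasses r' s t)
    (hcard : (classSizes r).card ≠ (classSizes r').card) :
    IsJoin (classSizes r) (classSizes r') ∨ IsJoin (classSizes r') (classSizes r) := by
  by_cases h : r s t <;> by_cases h' : r' s t
  · rw [mergeClasses_eq_self h, mergeClasses_eq_self h'] at hm
    exact absurd (congrArg (fun r => (classSizes r).card) hm) hcard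
  · rw [mergeClasses_eq_self h] at hm
    exact Or.inr (hm ▸ isJoin_classSizes_mergeClasses h')
  · rw [mergeClasses_eq_self h'] at hm
    exact Or.inl (hm ▸ isJoin_classSizes_mergeClasses h)
  · have hr := (isJoin_classSizes_mergeClasses h).card_eq
    have hr' := (isJoin_classSizes_mergeClasses h').card_eq
    rw [hm] at hr
    exact absurd (hr.trans hr'.symm) hcard

end ClassSizes

section SwapMul

variable {X : Type*} {m : Setoid X} {s t : X}

theorem setoid_sameCycle_le_iff {h : Perm X} :
    Perm.SameCycle.setoid h ≤ m ↔ ∀ x, m x (h x) := by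
  constructor
  · exact fun hm x => hm (Perm.sameCycle_apply_right.2 (Perm.SameCycle.refl h x))
  · rintro hm x _ ⟨n, rfl⟩
    induction n with
    | zero => exact m.refl x
    | succ n ih =>
      rw [add_comm, zpow_one_add]
      exact m.trans ih (hm _)
    | pred n ih =>
      refine m.trans ih (m.symm ?_)
      convert hm ((h ^ (-(n : ℤ) - 1)) x) using 1
      rw [← Perm.mul_apply, ← zpow_one_add, add_sub_cancel]

theorem rel_swap_apply [DecidableEq X] (hst : m s t) (x : X) : m x (swap s t x) := by
  rw [swap_apply_def]
  split_ifs with hxs hxt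
  · exact hxs ▸ hst
  · exact hxt ▸ m.symm hst
  · exact m.refl x

theorem mergeClasses_setoid_sameCycle_swap_mul [DecidableEq X] (h : Perm X) (s t : X) :
    mergeClasses (Perm.SameCycle.setoid (swap s t * h)) s t =
      mergeClasses (Perm.SameCycle.setoid h) s t := by
  refine eq_of_forall_ge_iff fun m => ?_
  simp only [mergeClasses_le_iff, setoid_sameCycle_le_iff, Perm.mul_apply]
  refine and_congr_left fun hst => forall_congr' fun x => ?_
  have hswap : m (h x) (swap s t (h x)) := rel_swap_apply hst (h x)
  exact ⟨(m.trans · (m.symm hswap)), (m.trans · hswap)⟩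

end SwapMul

section CycleTypeFull

variable {X : Type*} [Fintype X] [DecidableEq X] {g h : Perm X} {s t x : X}

theorem part_setoid_sameCycle_of_fixed (hx : h x = x) :
    (classPartition (Perm.SameCycle.setoid h)).part x = {x} := by
  ext y
  rw [mem_part_classPartition, mem_singleton]
  exact ⟨fun hxy => (Perm.SameCycle.eq_of_left hxy hx).symm,
    fun hyx => hyx ▸ Perm.SameCycle.refl h x⟩

theorem part_setoid_sameCycle_of_not_fixed (hx : h x ≠ x) :
    (classPartition (Perm.SameCycle.setoid h)).part x = (h.cycleOf x).support := by
  ext y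
  rw [mem_part_classPartition, Perm.mem_support_cycleOf_iff' hx]
  rfl

theorem cycleFactorsFinset_eq_image_cycleOf (h : Perm X) :
    h.cycleFactorsFinset = h.support.image h.cycleOf := by
  ext c
  rw [mem_image]
  constructor
  · intro hc
    obtain ⟨x, hx⟩ := (Perm.mem_cycleFactorsFinset_iff.1 hc).1.nonempty_support
    exact ⟨x, Perm.mem_cycleFactorsFinset_support_le hc hx, (Perm.cycle_is_cycleOf hx hc).symm⟩
  · rintro ⟨x, hx, rfl⟩
    exact Perm.cycleOf_mem_cycleFactorsFinset_iff.2 hx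

theorem support_injOn_cycleFactorsFinset (h : Perm X) :
    Set.InjOn Perm.support (h.cycleFactorsFinset : Set (Perm X)) := by
  intro c hc d hd hcd
  obtain ⟨x, hx⟩ := (Perm.mem_cycleFactorsFinset_iff.1 hc).1.nonempty_support
  rw [Perm.cycle_is_cycleOf hx hc, Perm.cycle_is_cycleOf (hcd ▸ hx) hd]

theorem disjoint_image_support_image_singleton (h : Perm X) (S : Finset X) :
    Disjoint (h.cycleFactorsFinset.image Perm.support) (S.image singleton) := by
  simp only [disjoint_left, mem_image, not_exists, not_and]
  rintro _ ⟨c, hc, rfl⟩ x - hx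
  have two_le := (Perm.mem_cycleFactorsFinset_iff.1 hc).1.two_le_card_support
  rw [← hx, card_singleton] at two_le
  omega

theorem parts_setoid_sameCycle (h : Perm X) :
    (classPartition (Perm.SameCycle.setoid h)).parts =
      (h.cycleFactorsFinset.image Perm.support).disjUnion
        ((univ.filter fun x => h x = x).image singleton)
        (disjoint_image_support_image_singleton h _) := by
  ext A
  simp only [mem_parts_classPartition, cycleFactorsFinset_eq_image_cycleOf, mem_disjUnion,
    mem_image, exists_exists_and_eq_and, mem_filter_univ, Perm.mem_support]
  constructor
  · rintro ⟨x, rfl⟩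
    by_cases hx : h x = x
    · exact Or.inr ⟨x, hx, (part_setoid_sameCycle_of_fixed hx).symm⟩
    · exact Or.inl ⟨x, hx, (part_setoid_sameCycle_of_not_fixed hx).symm⟩
  · rintro (⟨x, hx, rfl⟩ | ⟨x, hx, rfl⟩)
    exacts [⟨x, part_setoid_sameCycle_of_not_fixed hx⟩, ⟨x, part_setoid_sameCycle_of_fixed hx⟩]

theorem cycleTypeFull_eq_classSizes (h : Perm X) :
    cycleTypeFull h = classSizes (Perm.SameCycle.setoid h) := by
  rw [classSizes, parts_setoid_sameCycle, disjUnion_val, Multiset.map_add,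
    image_val_of_injOn (support_injOn_cycleFactorsFinset h),
    image_val_of_injOn singleton_injective.injOn, Multiset.map_map, Multiset.map_map,
    cycleTypeFull, Perm.cycleType_def]
  simp only [Function.comp_def, card_singleton, Multiset.map_const', card_val]

theorem pos_of_mem_cycleTypeFull {n : ℕ} (hn : n ∈ cycleTypeFull h) : 0 < n := by
  rcases Multiset.mem_add.1 hn with hn | hn
  · exact zero_lt_one.trans (Perm.one_lt_of_mem_cycleType hn)
  · exact (Multiset.eq_of_mem_replicate hn).symm ▸ zero_lt_one

theorem isJoin_cycleTypeFull_iff_exists_cut :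
    IsJoin (cycleTypeFull g) (cycleTypeFull h) ↔
      ∃ k a b : ℕ, k ∈ cycleTypeFull h ∧ 0 < a ∧ 0 < b ∧ a + b = k ∧
        cycleTypeFull g = (cycleTypeFull h).erase k + {a, b} := by
  rw [isJoin_iff_exists_erase_add_pair]
  constructor
  · rintro ⟨a, b, hab, hg⟩
    exact ⟨a + b, a, b, hab, pos_of_mem_cycleTypeFull (h := g) (by simp [hg]),
      pos_of_mem_cycleTypeFull (h := g) (by simp [hg]), rfl, hg⟩
  · rintro ⟨_, a, b, hab, -, -, rfl, hg⟩
    exact ⟨a, b, hab, hg⟩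

theorem sign_eq_neg_one_pow_card_add_card_cycleTypeFull (h : Perm X) :
    Perm.sign h = (-1) ^ (Fintype.card X + (cycleTypeFull h).card) := by
  have hX : Fintype.card X = h.cycleType.sum + #{x | h x = x} := by
    rw [Perm.sum_cycleType, ← card_univ, add_comm]
    exact (card_filter_add_card_filter_not (s := univ) fun x => h x = x).symm
  rw [Perm.sign_of_cycleType, cycleTypeFull, Multiset.card_add, Multiset.card_replicate, hX,
    add_add_add_comm, pow_add _ _ (_ + _), Even.neg_one_pow (Even.add_self _), mul_one]

theorem card_cycleTypeFull_swap_mul_ne (h : Perm X) (hst : s ≠ t) :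
    (cycleTypeFull (swap s t * h)).card ≠ (cycleTypeFull h).card := by
  intro hcard
  have hsign : Perm.sign (swap s t * h) = Perm.sign h := by
    simp only [sign_eq_neg_one_pow_card_add_card_cycleTypeFull, hcard]
  rw [Perm.sign_mul, Perm.sign_swap hst, neg_one_mul] at hsign
  exact units_ne_neg_self _ hsign.symm

end CycleTypeFull

/-- for a permutation `h` of a finite set `X` and points `s ≠ t`, the cycle
type (including fixed points) of `swap s t ∘ h` is obtained from that of `h` in exactly one
of the two ways: (join) two parts `i`, `j` are removed and one part `i + j` is added, or
(cut) one part `k` is removed and two parts `a`, `b` with `a + b = k` are added. -/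
theorem swap_mul_cycleTypeFull_join_xor_cut
    {X : Type*} [Fintype X] [DecidableEq X] (h : Equiv.Perm X) (s t : X) (hst : s ≠ t) :
    Xor'
      (∃ i j : ℕ, i ∈ cycleTypeFull h ∧ j ∈ (cycleTypeFull h).erase i ∧
        cycleTypeFull (Equiv.swap s t * h)
          = ((cycleTypeFull h).erase i).erase j + {i + j})
      (∃ k a b : ℕ, k ∈ cycleTypeFull h ∧ 0 < a ∧ 0 < b ∧ a + b = k ∧
        cycleTypeFull (Equiv.swap s t * h)
          = (cycleTypeFull h).erase k + {a, b}) := by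
  rw [← isJoin_iff_exists_erase_erase, ← isJoin_cycleTypeFull_iff_exists_cut]
  refine (xor_iff_or_and_not_and _ _).2 ⟨?_, fun ⟨hjoin, hcut⟩ => hjoin.asymm hcut⟩
  have hcard := card_cycleTypeFull_swap_mul_ne h hst
  simp only [cycleTypeFull_eq_classSizes] at hcard ⊢
  exact isJoin_classSizes_or_isJoin_classSizes
    (mergeClasses_setoid_sameCycle_swap_mul h s t).symm hcard.symm
end

section
/- Let h be a permutation of a finite set X of size d with cycle type μ (including fixed points), and let i be a positive integer. Then the number of transpositions τ of X such that the cycle type of τ∘h equals μ with one part equal to 2i removed and two parts equal to i added is exactly i·m_{2i}(μ). -/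
open Finset Equiv

/-!
A point lying on a cycle of size `m` has minimal period `m`, so a sum over points of a function of
the period is a sum over the parts of the cycle type in which the part `m` has weight `m`.

If `a` has period `k + l`, then `swap a (h^[k] a) * h` cuts the cycle of `a` into cycles of sizes
`k` and `l` and leaves the others unchanged. As `swap a b` is an involution, it glues the cycles of
`a` and `b` if these are distinct. Comparing cycle types, `swap a b` replaces a part `2i` by two
parts `i` if and only if `a` has period `2i` and `b = h^[i] a`. There are `2i * m_{2i}` such ordered
pairs `(a, b)`, and every transposition arises from two of them.
-/

open Function hiding swap

section Iteration

variable {α : Type*}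

lemma iterate_eq_iterate_of_forall_lt {f g : α → α} {x : α} {n : ℕ}
    (hfg : ∀ j < n, g (f^[j] x) = f (f^[j] x)) : g^[n] x = f^[n] x := by
  induction n with
  | zero => rfl
  | succ n ih =>
    rw [iterate_succ_apply', iterate_succ_apply', ih fun j hj => hfg j (by omega), hfg n (by omega)]

lemma minimalPeriod_eq_of_forall_iterate_eq {f g : α → α} {x : α} (hfg : ∀ n, g^[n] x = f^[n] x) :
    minimalPeriod g x = minimalPeriod f x :=
  minimalPeriod_eq_minimalPeriod_iff.2 fun n => by simp only [IsPeriodicPt, IsFixedPt, hfg]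

lemma iterate_ne_self_of_lt_minimalPeriod {f : α → α} {x : α} {j : ℕ} (hj : 0 < j)
    (hjn : j < minimalPeriod f x) : f^[j] x ≠ x :=
  not_isPeriodicPt_of_pos_of_lt_minimalPeriod hj.ne' hjn

lemma minimalPeriod_eq_of_forall_iterate_ne {f : α → α} {x : α} {n : ℕ} (hn : 0 < n)
    (hx : IsPeriodicPt f n x) (hne : ∀ j, 0 < j → j < n → f^[j] x ≠ x) : minimalPeriod f x = n := by
  refine le_antisymm (hx.minimalPeriod_le hn) (not_lt.1 fun hlt => ?_)
  exact hne _ (hx.minimalPeriod_pos hn) hlt iterate_minimalPeriod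

lemma sameCycle_iterate (h : Perm α) (a : α) (j : ℕ) : h.SameCycle a (h^[j] a) := by
  rw [Perm.iterate_eq_pow, Perm.sameCycle_pow_right]

lemma minimalPeriod_eq_card_of_isCycleOn {h : Perm α} {s : Finset α} (hs : h.IsCycleOn s) {x : α}
    (hx : x ∈ s) : minimalPeriod h x = #s :=
  eq_of_forall_dvd fun n => by
    rw [← isPeriodicPt_iff_minimalPeriod_dvd, ← hs.pow_apply_eq hx, ← Perm.iterate_eq_pow]; rfl

variable [Finite α]

lemma minimalPeriod_perm_pos (h : Perm α) (x : α) : 0 < minimalPeriod h x :=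
  minimalPeriod_pos_of_mem_periodicPts (h.injective.mem_periodicPts x)

lemma minimalPeriod_perm_iterate (h : Perm α) (x : α) (j : ℕ) :
    minimalPeriod h (h^[j] x) = minimalPeriod h x :=
  minimalPeriod_apply_iterate (h.injective.mem_periodicPts x) j

lemma exists_iterate_eq_of_sameCycle {h : Perm α} {a b : α} (hab : h.SameCycle a b) :
    ∃ k < minimalPeriod h a, h^[k] a = b := by
  obtain ⟨m, rfl⟩ := hab.exists_nat_pow_eq
  exact ⟨m % minimalPeriod h a, Nat.mod_lt _ (minimalPeriod_perm_pos h a),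
    by rw [iterate_mod_minimalPeriod_eq, Perm.iterate_eq_pow]⟩

end Iteration

section CycleSums

variable {X M : Type*} [Fintype X] [DecidableEq X] [AddCommMonoid M]

lemma sum_filter_sameCycle (h : Perm X) (a : X) (f : X → M) :
    ∑ x with h.SameCycle a x, f x = ∑ j ∈ range (minimalPeriod h a), f (h^[j] a) := by
  symm
  refine sum_nbij (fun j => h^[j] a) ?_ ?_ ?_ fun _ _ => rfl
  · exact fun j _ => mem_filter.2 ⟨mem_univ _, sameCycle_iterate h a j⟩
  · simpa only [coe_range] using iterate_injOn_Iio_minimalPeriod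
  · intro x hx
    obtain ⟨k, hk, hkx⟩ := exists_iterate_eq_of_sameCycle (mem_filter.1 hx).2
    exact ⟨k, mem_coe.2 (mem_range.2 hk), hkx⟩

lemma sum_support_minimalPeriod (h : Perm X) (φ : ℕ → M) :
    ∑ x ∈ h.support, φ (minimalPeriod h x) = (h.cycleType.map fun m => m • φ m).sum := by
  have fiber_eq {c : Perm X} (hc : c ∈ h.cycleFactorsFinset) :
      {x ∈ h.support | h.cycleOf x = c} = c.support := by
    ext x
    rw [mem_filter, eq_comm, Perm.eq_cycleOf_of_mem_cycleFactorsFinset_iff h c hc,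
      and_iff_right_of_imp fun hx => Perm.mem_cycleFactorsFinset_support_le hc hx]
  calc ∑ x ∈ h.support, φ (minimalPeriod h x)
      = ∑ c ∈ h.cycleFactorsFinset, ∑ x ∈ h.support with h.cycleOf x = c, φ (minimalPeriod h x) :=
        (sum_fiberwise_of_maps_to
          (fun _ hx => Perm.cycleOf_mem_cycleFactorsFinset_iff.2 hx) _).symm
    _ = ∑ c ∈ h.cycleFactorsFinset, #c.support • φ #c.support := by
        refine sum_congr rfl fun c hc => ?_
        rw [fiber_eq hc, ← sum_const]
        refine sum_congr rfl fun x hx => congrArg φ ?_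
        exact minimalPeriod_eq_card_of_isCycleOn
          (Perm.isCycleOn_support_of_mem_cycleFactorsFinset hc) hx
    _ = (h.cycleType.map fun m => m • φ m).sum := by
        rw [Perm.cycleType_def, Multiset.map_map]; rfl

lemma sum_minimalPeriod (h : Perm X) (φ : ℕ → M) :
    ∑ x, φ (minimalPeriod h x) = ((cycleTypeFull h).map fun m => m • φ m).sum := by
  have sum_fixed : ∑ x with h x = x, φ (minimalPeriod h x) = #{x | h x = x} • φ 1 := by
    rw [← sum_const]
    refine sum_congr rfl fun x hx => congrArg φ ?_
    exact minimalPeriod_eq_one_iff_isFixedPt.2 (mem_filter.1 hx).2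
  rw [← sum_filter_not_add_sum_filter univ (fun x => h x = x), sum_fixed]
  change ∑ x ∈ h.support, φ (minimalPeriod h x) + _ = _
  rw [sum_support_minimalPeriod]
  simp only [cycleTypeFull, Multiset.map_add, Multiset.sum_add, Multiset.map_replicate,
    Multiset.sum_replicate, one_smul]

end CycleSums

section CycleType

variable {X : Type*} [Fintype X] [DecidableEq X]

lemma sum_cycleTypeFull (h : Perm X) : (cycleTypeFull h).sum = Fintype.card X := by
  simpa using (sum_minimalPeriod h fun _ => (1 : ℕ)).symm

lemma zero_notMem_cycleTypeFull (h : Perm X) : 0 ∉ cycleTypeFull h := by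
  intro h0
  rcases Multiset.mem_add.1 h0 with h0 | h0
  · exact absurd (Perm.two_le_of_mem_cycleType h0) (by omega)
  · exact zero_ne_one (Multiset.eq_of_mem_replicate h0)

lemma sum_map_mul_indicator_eq_mul_count (s : Multiset ℕ) (r : ℕ) :
    (s.map fun m => m * if m = r then 1 else 0).sum = r * s.count r := by
  rw [Multiset.sum_map_eq_nsmul_single r fun m hm _ => by rw [if_neg hm, mul_zero], if_pos rfl,
    mul_one, smul_eq_mul, mul_comm]

lemma card_filter_minimalPeriod_eq (h : Perm X) (r : ℕ) :
    #{x | minimalPeriod h x = r} = r * (cycleTypeFull h).count r := by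
  rw [card_filter, sum_minimalPeriod h fun m => if m = r then 1 else 0]
  exact sum_map_mul_indicator_eq_mul_count _ r

lemma multiset_eq_of_forall_sum_map_mul_eq {s t : Multiset ℕ} (hs : 0 ∉ s) (ht : 0 ∉ t)
    (hst : ∀ φ : ℕ → ℕ, (s.map fun m => m * φ m).sum = (t.map fun m => m * φ m).sum) : s = t := by
  ext r
  rcases r.eq_zero_or_pos with rfl | hr
  · rw [Multiset.count_eq_zero_of_notMem hs, Multiset.count_eq_zero_of_notMem ht]
  · apply Nat.eq_of_mul_eq_mul_left hr
    simpa only [sum_map_mul_indicator_eq_mul_count] using hst fun m => if m = r then 1 else 0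

end CycleType

section SwapMul

variable {X : Type*} [DecidableEq X]

lemma swap_mul_iterate_of_lt {h : Perm X} {a b : X} {m j : ℕ} (hj : j < m)
    (hab : ∀ i, 0 < i → i < m → h^[i] a ≠ a ∧ h^[i] a ≠ b) :
    (swap a b * h)^[j] a = h^[j] a := by
  refine iterate_eq_iterate_of_forall_lt fun i hi => ?_
  obtain ⟨hne_a, hne_b⟩ := hab (i + 1) i.succ_pos (by omega)
  rw [iterate_succ_apply'] at hne_a hne_b
  exact swap_apply_of_ne_of_ne hne_a hne_b

lemma swap_mul_iterate_of_pos {h : Perm X} {a b : X} {m : ℕ} (hm : 0 < m)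
    (hab : ∀ i, 0 < i → i < m → h^[i] a ≠ a ∧ h^[i] a ≠ b) :
    (swap a b * h)^[m] a = swap a b (h^[m] a) := by
  obtain ⟨m, rfl⟩ := Nat.exists_eq_add_one_of_ne_zero hm.ne'
  rw [iterate_succ_apply', iterate_succ_apply', swap_mul_iterate_of_lt m.lt_succ_self hab,
    Perm.mul_apply]

lemma minimalPeriod_swap_mul_of_not_sameCycle {h : Perm X} {a b x : X} (hab : h.SameCycle a b)
    (hx : ¬ h.SameCycle a x) : minimalPeriod (swap a b * h) x = minimalPeriod h x := by
  refine minimalPeriod_eq_of_forall_iterate_eq fun n =>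
    iterate_eq_iterate_of_forall_lt fun j _ => ?_
  have hxj : ¬ h.SameCycle a (h (h^[j] x)) := by
    rwa [Perm.sameCycle_apply_right, Perm.iterate_eq_pow, Perm.sameCycle_pow_right]
  exact swap_apply_of_ne_of_ne (fun e => hxj (e ▸ Perm.SameCycle.rfl)) (fun e => hxj (e ▸ hab))

variable [Finite X]

lemma sameCycle_swap_mul_of_not_sameCycle {h : Perm X} {a b : X} (hab : ¬ h.SameCycle a b) :
    (swap a b * h).SameCycle a b := by
  have hb : (swap a b * h)^[minimalPeriod h a] a = b := by
    rw [swap_mul_iterate_of_pos (minimalPeriod_perm_pos h a), iterate_minimalPeriod,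
      swap_apply_left]
    exact fun i hi hin => ⟨iterate_ne_self_of_lt_minimalPeriod hi hin,
      fun e => hab (e ▸ sameCycle_iterate h a i)⟩
  simpa only [hb] using sameCycle_iterate (swap a b * h) a (minimalPeriod h a)

lemma minimalPeriod_swap_mul_iterate {h : Perm X} {a : X} {j k : ℕ} (hj : j < k)
    (hk : k < minimalPeriod h a) :
    minimalPeriod (swap a (h^[k] a) * h) (h^[j] a) = k := by
  have hk0 : 0 < k := by omega
  have hne : ∀ i, 0 < i → i < k → h^[i] a ≠ a ∧ h^[i] a ≠ h^[k] a := fun i hi hik =>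
    ⟨iterate_ne_self_of_lt_minimalPeriod hi (hik.trans hk), fun e =>
      hik.ne ((iterate_eq_iterate_iff_of_lt_minimalPeriod (hik.trans hk) hk).1 e)⟩
  rw [← swap_mul_iterate_of_lt hj hne, minimalPeriod_perm_iterate]
  refine minimalPeriod_eq_of_forall_iterate_ne hk0 ?_ fun i hi hik => ?_
  · exact (swap_mul_iterate_of_pos hk0 hne).trans (swap_apply_right _ _)
  · rw [swap_mul_iterate_of_lt hik hne]
    exact (hne i hi hik).1

end SwapMul

section Cut

variable {X : Type*} [Fintype X] [DecidableEq X]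

lemma sum_minimalPeriod_swap_mul_iterate {M : Type*} [AddCommMonoid M] {h : Perm X} {a : X}
    {k l : ℕ} (hk : 0 < k) (hl : 0 < l) (ha : minimalPeriod h a = k + l) (φ : ℕ → M) :
    ∑ x, φ (minimalPeriod (swap a (h^[k] a) * h) x) + (k + l) • φ (k + l) =
      ∑ x, φ (minimalPeriod h x) + (k • φ k + l • φ l) := by
  set b := h^[k] a with hb
  have hba : h^[l] b = a := by
    rw [hb, ← iterate_add_apply, add_comm, ← ha, iterate_minimalPeriod]
  have first_arc : ∀ j < k, minimalPeriod (swap a b * h) (h^[j] a) = k := fun j hj =>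
    minimalPeriod_swap_mul_iterate hj (by omega)
  have second_arc : ∀ j < l, minimalPeriod (swap a b * h) (h^[j] b) = l := fun j hj => by
    have hbl : l < minimalPeriod h b := by rw [hb, minimalPeriod_perm_iterate]; omega
    simpa only [hba, swap_comm b a] using minimalPeriod_swap_mul_iterate hj hbl
  have sum_cycle : ∑ x with h.SameCycle a x, φ (minimalPeriod h x) = (k + l) • φ (k + l) := by
    simp only [sum_filter_sameCycle, minimalPeriod_perm_iterate, ha, sum_const, card_range]
  have sum_cut : ∑ x with h.SameCycle a x, φ (minimalPeriod (swap a b * h) x) =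
      k • φ k + l • φ l := by
    rw [sum_filter_sameCycle, ha, sum_range_add]
    congr 1
    · rw [sum_congr rfl fun j hj => by rw [first_arc j (mem_range.1 hj)], sum_const, card_range]
    · rw [sum_congr rfl fun j hj => by
        rw [add_comm, iterate_add_apply, second_arc j (mem_range.1 hj)], sum_const, card_range]
  have sum_off : ∑ x with ¬ h.SameCycle a x, φ (minimalPeriod (swap a b * h) x) =
      ∑ x with ¬ h.SameCycle a x, φ (minimalPeriod h x) :=
    sum_congr rfl fun x hx => by
      rw [minimalPeriod_swap_mul_of_not_sameCycle (sameCycle_iterate h a k) (mem_filter.1 hx).2]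
  rw [← sum_filter_add_sum_filter_not univ (h.SameCycle a), sum_cut, sum_off,
    ← sum_filter_add_sum_filter_not univ (h.SameCycle a) fun x => φ (minimalPeriod h x), sum_cycle]
  abel

theorem cycleTypeFull_swap_mul_iterate {h : Perm X} {a : X} {k l : ℕ} (hk : 0 < k) (hl : 0 < l)
    (ha : minimalPeriod h a = k + l) :
    cycleTypeFull (swap a (h^[k] a) * h) + {k + l} = cycleTypeFull h + {k, l} := by
  apply multiset_eq_of_forall_sum_map_mul_eq
  · simp [zero_notMem_cycleTypeFull, (Nat.add_pos_left hk l).ne]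
  · simp [zero_notMem_cycleTypeFull, hk.ne, hl.ne]
  · intro φ
    have hsum := sum_minimalPeriod_swap_mul_iterate hk hl ha φ
    rw [sum_minimalPeriod, sum_minimalPeriod] at hsum
    simpa only [smul_eq_mul, Multiset.map_add, Multiset.sum_add, Multiset.insert_eq_cons,
      Multiset.map_cons, Multiset.sum_cons, Multiset.map_singleton,
      Multiset.sum_singleton] using hsum

lemma exists_cycleTypeFull_swap_mul_of_sameCycle {h : Perm X} {a b : X} (hne : a ≠ b)
    (hab : h.SameCycle a b) :
    ∃ k l, minimalPeriod h a = k + l ∧ h^[k] a = b ∧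
      cycleTypeFull (swap a b * h) + {k + l} = cycleTypeFull h + {k, l} := by
  obtain ⟨k, hkn, rfl⟩ := exists_iterate_eq_of_sameCycle hab
  obtain ⟨l, hl⟩ := Nat.exists_eq_add_of_lt hkn
  have hk : 0 < k := Nat.pos_of_ne_zero fun hk0 => hne (by rw [hk0, iterate_zero_apply])
  exact ⟨k, l + 1, hl, rfl, cycleTypeFull_swap_mul_iterate hk l.succ_pos hl⟩

lemma card_cycleTypeFull_swap_mul_of_not_sameCycle {h : Perm X} {a b : X}
    (hab : ¬ h.SameCycle a b) :
    Multiset.card (cycleTypeFull (swap a b * h)) + 1 = Multiset.card (cycleTypeFull h) := by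
  have hne : a ≠ b := fun e => hab (e ▸ Perm.SameCycle.rfl)
  obtain ⟨k, l, -, -, hcut⟩ :=
    exists_cycleTypeFull_swap_mul_of_sameCycle hne (sameCycle_swap_mul_of_not_sameCycle hab)
  rw [← mul_assoc, swap_mul_self, one_mul] at hcut
  have hcard := congrArg Multiset.card hcut
  simp only [Multiset.card_add, Multiset.card_singleton, Multiset.card_pair] at hcard
  omega

end Cut

section Halving

lemma eq_erase_add_pair_iff {s t : Multiset ℕ} {i : ℕ} (hi : 0 < i) (hsum : t.sum = s.sum) :
    t = s.erase (2 * i) + {i, i} ↔ t + {2 * i} = s + {i, i} := by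
  have erase_add (hmem : 2 * i ∈ s) : s.erase (2 * i) + {i, i} + {2 * i} = s + {i, i} := by
    rw [add_right_comm, add_comm (s.erase _), Multiset.singleton_add, Multiset.cons_erase hmem]
  constructor
  · intro ht
    have hmem : 2 * i ∈ s := by
      by_contra hmem
      rw [Multiset.erase_of_notMem hmem] at ht
      rw [ht, Multiset.sum_add, Multiset.sum_pair] at hsum
      omega
    rw [ht, erase_add hmem]
  · intro ht
    have hmem : 2 * i ∈ s := by
      have : 2 * i ∈ s + {i, i} := ht ▸ Multiset.mem_add.2 (.inr (Multiset.mem_singleton_self _))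
      simpa [show 2 * i ≠ i by omega] using this
    exact add_right_cancel (ht.trans (erase_add hmem).symm)

lemma eq_and_eq_of_cut_eq_halving {s t : Multiset ℕ} {i k l : ℕ} (hi : 0 < i)
    (hcut : t + {k + l} = s + {k, l}) (hhalf : t + {2 * i} = s + {i, i}) : k = i ∧ l = i := by
  have hparts : ({2 * i} : Multiset ℕ) + {k, l} = {k + l} + {i, i} := by
    apply add_left_cancel (a := s + t)
    calc s + t + ({2 * i} + {k, l}) = (t + {2 * i}) + (s + {k, l}) := by abel
      _ = (s + {i, i}) + (t + {k + l}) := by rw [hhalf, hcut]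
      _ = s + t + ({k + l} + {i, i}) := by abel
  have hsum : 2 * i = k + l := by
    have : 2 * i ∈ ({k + l} : Multiset ℕ) + {i, i} := hparts ▸ by simp
    simpa [show 2 * i ≠ i by omega] using this
  have hk : k = i := by
    rw [hsum] at hparts
    have : k ∈ ({i, i} : Multiset ℕ) := add_left_cancel hparts ▸ by simp
    simpa using this
  omega

variable {X : Type*} [Fintype X] [DecidableEq X]

theorem cycleTypeFull_swap_mul_eq_erase_add_pair_iff {h : Perm X} {a b : X} (hne : a ≠ b) {i : ℕ}
    (hi : 0 < i) :
    cycleTypeFull (swap a b * h) = (cycleTypeFull h).erase (2 * i) + {i, i} ↔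
      minimalPeriod h a = 2 * i ∧ h^[i] a = b := by
  rw [eq_erase_add_pair_iff hi (by rw [sum_cycleTypeFull, sum_cycleTypeFull])]
  constructor
  · intro hhalf
    have hab : h.SameCycle a b := by
      by_contra hab
      have hcard_glue := card_cycleTypeFull_swap_mul_of_not_sameCycle hab
      have hcard := congrArg Multiset.card hhalf
      simp only [Multiset.card_add, Multiset.card_singleton, Multiset.card_pair] at hcard
      omega
    obtain ⟨k, l, ha, hb, hcut⟩ := exists_cycleTypeFull_swap_mul_of_sameCycle hne hab
    obtain ⟨rfl, rfl⟩ := eq_and_eq_of_cut_eq_halving hi hcut hhalf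
    exact ⟨ha.trans (two_mul _).symm, hb⟩
  · rintro ⟨ha, rfl⟩
    rw [two_mul] at ha ⊢
    exact cycleTypeFull_swap_mul_iterate hi hi ha

end Halving

section Transpositions

variable {X : Type*} [DecidableEq X]

lemma swap_eq_swap_iff_of_ne {a b c d : X} (hab : a ≠ b) :
    swap c d = swap a b ↔ (c, d) = (a, b) ∨ (c, d) = (b, a) := by
  constructor
  · intro e
    have hcd : swap c d a = b := by rw [e, swap_apply_left]
    rw [swap_apply_def] at hcd
    grind
  · rintro (e | e) <;> obtain ⟨rfl, rfl⟩ := Prod.mk.inj e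
    exacts [rfl, swap_comm _ _]

lemma two_mul_ncard_isSwap [Fintype X] (P : Perm X → Prop) [DecidablePred P] :
    2 * {τ : Perm X | τ.IsSwap ∧ P τ}.ncard =
      #{p : X × X | p.1 ≠ p.2 ∧ P (swap p.1 p.2)} := by
  classical
  set pairs : Finset (X × X) := {p | p.1 ≠ p.2 ∧ P (swap p.1 p.2)} with hpairs
  have isSwap_set : {τ : Perm X | τ.IsSwap ∧ P τ} = pairs.image fun p => swap p.1 p.2 := by
    ext τ
    simp only [Set.mem_ofPred_eq, coe_image, Set.mem_image, hpairs, coe_filter, mem_univ, true_and]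
    constructor
    · rintro ⟨⟨a, b, hab, rfl⟩, hP⟩
      exact ⟨(a, b), ⟨hab, hP⟩, rfl⟩
    · rintro ⟨⟨a, b⟩, ⟨hab, hP⟩, rfl⟩
      exact ⟨⟨a, b, hab, rfl⟩, hP⟩
  rw [isSwap_set, Set.ncard_coe_finset, card_eq_sum_card_image (fun p => swap p.1 p.2) pairs,
    sum_const_nat (m := 2), mul_comm]
  intro τ hτ
  obtain ⟨⟨a, b⟩, hp, rfl⟩ := mem_image.1 hτ
  obtain ⟨hab, hP⟩ : a ≠ b ∧ P (swap a b) := (mem_filter.1 hp).2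
  have fiber_eq : {p ∈ pairs | swap p.1 p.2 = swap a b} = {(a, b), (b, a)} := by
    ext ⟨c, d⟩
    rw [mem_filter, swap_eq_swap_iff_of_ne hab, mem_insert, mem_singleton,
      and_iff_right_of_imp]
    rintro (e | e) <;> obtain ⟨rfl, rfl⟩ := Prod.mk.inj e
    · exact hp
    · exact mem_filter.2 ⟨mem_univ _, hab.symm, by rwa [swap_comm]⟩
  rw [fiber_eq, card_pair fun e => hab (congrArg Prod.fst e)]

end Transpositions

/-- for a permutation `h` with cycle type `μ` (including fixed points) and a
positive integer `i`, the number of transpositions `τ` such that the cycle type of `τ ∘ h`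
is `μ` with one part `2i` removed and two parts `i` added is exactly `i · m_{2i}(μ)`. -/
theorem count_cut_transpositions_eq
    {X : Type*} [Fintype X] [DecidableEq X] (h : Equiv.Perm X) (i : ℕ) (hi : 0 < i) :
    Set.ncard {τ : Equiv.Perm X | τ.IsSwap ∧
        cycleTypeFull (τ * h)
          = (cycleTypeFull h).erase (2 * i) + {i, i}}
      = i * (cycleTypeFull h).count (2 * i) := by
  apply Nat.eq_of_mul_eq_mul_left two_pos
  rw [two_mul_ncard_isSwap, ← mul_assoc, ← card_filter_minimalPeriod_eq]
  symm
  refine card_nbij (fun a => (a, h^[i] a)) ?_ (fun _ _ _ _ e => congrArg Prod.fst e) ?_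
  · intro a ha
    have ha : minimalPeriod h a = 2 * i := (mem_filter.1 ha).2
    have hne : a ≠ h^[i] a := (iterate_ne_self_of_lt_minimalPeriod hi (by omega)).symm
    exact mem_filter.2 ⟨mem_univ _, hne,
      (cycleTypeFull_swap_mul_eq_erase_add_pair_iff hne hi).2 ⟨ha, rfl⟩⟩
  · rintro ⟨a, b⟩ hp
    obtain ⟨hne, hhalf⟩ := (mem_filter.1 hp).2
    obtain ⟨ha, hb⟩ := (cycleTypeFull_swap_mul_eq_erase_add_pair_iff hne hi).1 hhalf
    exact ⟨a, mem_filter.2 ⟨mem_univ _, ha⟩, congrArg (Prod.mk a) hb⟩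
end

section
/- Let l ≥ 1 be an integer and let b_0, b_1, …, b_l be rational numbers. Then the following are equivalent: (i) for every integer i with 0 ≤ i ≤ l−1, ∑_{k=i}^{l} (k!/(k−i)!)·b_k = 0; (ii) for every k with 0 ≤ k ≤ l, b_k = (−1)^k·binom(l,k)·b_0. In particular, the space of solutions of the linear system (i) is one-dimensional, spanned by the vector (binom(l,k)·(−1)^k)_{k=0}^{l}. -/
open Finset

/-!
Equation `i` says that the `i`-th derivative of `p = ∑ b_k X^k` vanishes at `1`. In the absence of
additive torsion, the Taylor expansion at `1` shows that the equations for `i < l` together mean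
that `(X - 1)^l` divides `p`. As `p` has degree at most `l`, it is then a scalar multiple of
`(1 - X)^l`, and the scalar is the constant coefficient `b_0`.
-/

section

open Polynomial

theorem eval_iterate_derivative_eq_sum_Icc {R : Type*} [Semiring R] {p : R[X]} {l : ℕ}
    (hp : p.natDegree ≤ l) (i : ℕ) (x : R) :
    (derivative^[i] p).eval x =
      ∑ k ∈ Icc i l, (k.descFactorial i : R) * p.coeff k * x ^ (k - i) := by
  have hsubset : Icc i l ⊆ range (l + 1) := fun k hk =>
    mem_range.mpr (Nat.lt_succ_of_le (mem_Icc.mp hk).2)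
  have hvanish : ∀ k ∈ range (l + 1), k ∉ Icc i l →
      (k.descFactorial i : R) * p.coeff k * x ^ (k - i) = 0 := by
    intro k hk hk'
    have hki : k < i := by
      rw [mem_range] at hk
      rw [mem_Icc] at hk'
      lia
    rw [Nat.descFactorial_of_lt hki, Nat.cast_zero, zero_mul, zero_mul]
  have hsum := p.as_sum_range' (l + 1) (Nat.lt_succ_of_le hp)
  rw [sum_subset hsubset hvanish, hsum, iterate_derivative_sum, eval_finsetSum, ← hsum]
  refine sum_congr rfl fun k _ => ?_
  rw [← factorial_smul_hasseDeriv, LinearMap.smul_apply, hasseDeriv_monomial, eval_smul,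
    eval_monomial, nsmul_eq_mul, Nat.descFactorial_eq_factorial_mul_choose, Nat.cast_mul]
  simp only [mul_assoc]

variable {R : Type*} [CommRing R] {p : R[X]} {l : ℕ}

theorem X_sub_C_pow_dvd_iff_eval_iterate_derivative_eq_zero [IsAddTorsionFree R] {a : R} :
    (X - C a) ^ l ∣ p ↔ ∀ i < l, (derivative^[i] p).eval a = 0 := by
  rw [X_sub_C_pow_dvd_iff, ← taylor_apply, X_pow_dvd_iff]
  refine forall₂_congr fun i _ => ?_
  rw [taylor_coeff, ← factorial_smul_hasseDeriv, LinearMap.smul_apply, eval_smul,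
    smul_eq_zero_iff_right i.factorial_ne_zero]

theorem coeff_one_sub_X_pow (l k : ℕ) :
    ((1 - X : R[X]) ^ l).coeff k = (-1) ^ k * (l.choose k : R) := by
  have hcomp : (1 - X : R[X]) ^ l = ((1 + X) ^ l).comp (C (-1) * X) := by
    simp [sub_eq_add_neg]
  rw [hcomp, comp_C_mul_X_coeff, coeff_one_add_X_pow, mul_comm]

theorem X_sub_one_pow_dvd_iff_exists_eq_C_mul_one_sub_X_pow (hp : p.natDegree ≤ l) :
    (X - 1) ^ l ∣ p ↔ ∃ c, p = C c * (1 - X) ^ l := by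
  have hneg : (X - 1 : R[X]) ^ l = C ((-1) ^ l) * (1 - X) ^ l := by
    rw [C_pow, ← mul_pow, C_neg, C_1, neg_one_mul, neg_sub]
  constructor
  · nontriviality R
    intro hdvd
    have hdeg : p.natDegree ≤ ((X - 1 : R[X]) ^ l).natDegree := by
      rwa [← C_1, (monic_X_sub_C 1).natDegree_pow, natDegree_X_sub_C, mul_one]
    refine ⟨p.leadingCoeff * (-1) ^ l, ?_⟩
    rw [C_mul, mul_assoc, ← hneg]
    exact eq_leadingCoeff_mul_of_monic_of_dvd_of_natDegree_le
      ((monic_X_sub_C 1).pow l) hdvd hdeg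
  · rintro ⟨c, rfl⟩
    exact dvd_mul_of_dvd_right (pow_dvd_pow_of_dvd ⟨-1, by ring⟩ l) _

theorem X_sub_one_pow_dvd_iff_coeff_eq (hp : p.natDegree ≤ l) :
    (X - 1) ^ l ∣ p ↔ ∀ k ≤ l, p.coeff k = (-1) ^ k * (l.choose k : R) * p.coeff 0 := by
  rw [X_sub_one_pow_dvd_iff_exists_eq_C_mul_one_sub_X_pow hp]
  constructor
  · rintro ⟨c, rfl⟩ k -
    simp only [coeff_C_mul, coeff_one_sub_X_pow, pow_zero, Nat.choose_zero_right, Nat.cast_one,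
      mul_one]
    exact mul_comm _ _
  · intro hcoeff
    refine ⟨p.coeff 0, ext fun k => ?_⟩
    rw [coeff_C_mul, coeff_one_sub_X_pow, mul_comm]
    rcases le_or_gt k l with hk | hk
    · exact hcoeff k hk
    · rw [coeff_eq_zero_of_natDegree_lt (hp.trans_lt hk), Nat.choose_eq_zero_of_lt hk,
        Nat.cast_zero, mul_zero, zero_mul]

theorem kernel_of_falling_factorial_system_general [IsAddTorsionFree R] (l : ℕ) (b : ℕ → R) :
    (∀ i < l, ∑ k ∈ Icc i l, (k.descFactorial i : R) * b k = 0) ↔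
      ∀ k ≤ l, b k = (-1) ^ k * (l.choose k : R) * b 0 := by
  let p : R[X] := (PowerSeries.mk b).trunc (l + 1)
  have hdeg : p.natDegree ≤ l := Nat.lt_succ_iff.mp (PowerSeries.natDegree_trunc_lt _ l)
  have hcoeff {k : ℕ} (hk : k ≤ l) : p.coeff k = b k := by
    rw [PowerSeries.coeff_trunc, if_pos (Nat.lt_succ_of_le hk), PowerSeries.coeff_mk]
  have hderiv (i : ℕ) :
      (derivative^[i] p).eval 1 = ∑ k ∈ Icc i l, (k.descFactorial i : R) * b k := by
    rw [eval_iterate_derivative_eq_sum_Icc hdeg]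
    refine sum_congr rfl fun k hk => ?_
    rw [one_pow, mul_one, hcoeff (mem_Icc.mp hk).2]
  calc (∀ i < l, ∑ k ∈ Icc i l, (k.descFactorial i : R) * b k = 0)
    _ ↔ ∀ i < l, (derivative^[i] p).eval 1 = 0 := by simp only [hderiv]
    _ ↔ (X - 1) ^ l ∣ p := by rw [← X_sub_C_pow_dvd_iff_eval_iterate_derivative_eq_zero, C_1]
    _ ↔ ∀ k ≤ l, p.coeff k = (-1) ^ k * (l.choose k : R) * p.coeff 0 :=
      X_sub_one_pow_dvd_iff_coeff_eq hdeg
    _ ↔ ∀ k ≤ l, b k = (-1) ^ k * (l.choose k : R) * b 0 :=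
      forall₂_congr fun k hk => by rw [hcoeff hk, hcoeff l.zero_le]

end

/-- for `l ≥ 1` and rationals `b_0, …, b_l`, the linear system
`∑_{k=i}^{l} (k!/(k−i)!)·b_k = 0` for `0 ≤ i ≤ l−1` holds if and only if
`b_k = (−1)^k · binom(l,k) · b_0` for all `0 ≤ k ≤ l`; in particular the solution space
is one-dimensional, spanned by `((−1)^k binom(l,k))_k`. -/
theorem kernel_of_falling_factorial_system
    (l : ℕ) (hl : 1 ≤ l) (b : ℕ → ℚ) :
    (∀ i : ℕ, i < l →
        ∑ k ∈ Finset.Icc i l, (Nat.descFactorial k i : ℚ) * b k = 0)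
    ↔ (∀ k : ℕ, k ≤ l → b k = (-1) ^ k * (Nat.choose l k : ℚ) * b 0) :=
  kernel_of_falling_factorial_system_general l b
end
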